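/- Let S be a set and let P₀ and P₁ be two point-separating families of pseudometrics on S. For j = 0, 1 let X_j be the uniform space on S induced by P_j, and let X_∨ be the uniform space on S induced by P₀ ∪ P₁. Assume that for every d ∈ P₀ and z ∈ S the function x ↦ d(x,z) is uniformly continuous on X₁, and for every d ∈ P₁ and z ∈ S the function x ↦ d(x,z) is uniformly continuous on X₀. Let μ₀ be a uniform measure on X₀ and μ₁ a uniform measure on X₁ such that μ₀(g) = μ₁(g) for every bounded function g : S → ℝ that is uniformly continuous on both X₀ and X₁. Then there exists a uniform measure ν on X_∨ such that ν(g) = μ₀(g) for every g ∈ U_b(X₀) and ν(g) = μ₁(g) for every g ∈ U_b(X₁). -/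

import Mathlib

/-!
Put `A = U_b(X₀) ∩ U_b(X₁)` and let `m` be the common restriction of `μ₀` and `μ₁` to the vector
lattice `A`. By the crossed hypothesis `A` contains the truncations of the functions `d(·, z)`
for `d` in `P₀` or in `P₁`, hence also the functions `bump d F = max (0, 1 - d(·, F))` for
finite `F`.

* Uniform measures are tight (`exists_tight`): for a uniformly continuous pseudometric `d` and
  `ε > 0` there is a finite `F` with `|μ|(1 - bump d F) ≤ ε`. Since `bump d F ∈ A`, the functional
  `m` satisfies such estimates both for the pseudometrics of `X₀` and for those of `X₁`.
* Hahn–Banach extends `m` to a functional `ν` on all bounded functions that keeps every bound on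
  `|m|(g)` for `g ∈ A` (`exists_dominated_extension`). So `ν` is tight for the pseudometrics of
  `X₀` and of `X₁` simultaneously.
* Simultaneous tightness makes `ν` continuous on the UEB sets of `X_∨`
  (`continuousOn_of_tight`): up to small mass, `ν` lives on finitely many sets that are small for
  both a pseudometric of `X₀` and one of `X₁`, on each of which the members of a UEB set are
  nearly constant.
* On the region where `μ₀` lives up to `ε`, a function in `U_b(X₀)` is uniformly close to a member
  of `A`, so `ν = μ₀` on `U_b(X₀)`, and likewise for `μ₁` (`extension_eq`).
-/

open Topology Filter

/-- A pseudometric on a set `S`. -/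
def IsPseudometric {S : Type*} (d : S → S → ℝ) : Prop :=
  (∀ x, d x x = 0) ∧ (∀ x y, d x y = d y x) ∧ ∀ x y z, d x z ≤ d x y + d y z

/-- The coarsest uniformity (as a filter on `S × S`) making each pseudometric in `P`
uniformly continuous: it is generated by the entourages `{(x,y) : d(x,y) < ε}`. -/
def pseudometricUniformity {S : Type*} (P : Set (S → S → ℝ)) : Filter (S × S) :=
  ⨅ d ∈ P, ⨅ ε ∈ Set.Ioi (0 : ℝ), Filter.principal {p : S × S | d p.1 p.2 < ε}

/-- `P` separates the points of `S`. -/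
def SeparatesPoints' {S : Type*} (P : Set (S → S → ℝ)) : Prop :=
  ∀ x y : S, x ≠ y → ∃ d ∈ P, 0 < d x y

/-- The bounded uniformly continuous real-valued functions on `S` for the uniformity `u`. -/
def Ub {S : Type*} (u : UniformSpace S) : Set (S → ℝ) :=
  {f | @UniformContinuous S ℝ u _ f ∧ ∃ C : ℝ, ∀ x, |f x| ≤ C}

/-- A set of functions is UEB for `u` if it is uniformly equicontinuous (w.r.t. `u`) and
uniformly bounded. -/
def IsUEB {S : Type*} (u : UniformSpace S) (H : Set (S → ℝ)) : Prop :=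
  (@UniformEquicontinuous (↥H) ℝ S _ u fun f => (f : S → ℝ)) ∧
  ∃ C : ℝ, ∀ f ∈ H, ∀ x, |f x| ≤ C

/-- A uniform measure on `S` with uniformity `u`: a sup-norm-bounded linear functional on
`Ub u` whose restriction to every UEB set is continuous in the topology of pointwise
convergence (the product topology on `S → ℝ`). -/
def IsUniformMeasure {S : Type*} (u : UniformSpace S) (μ : (S → ℝ) → ℝ) : Prop :=
  (∀ f ∈ Ub u, ∀ g ∈ Ub u, μ (f + g) = μ f + μ g) ∧
  (∀ f ∈ Ub u, ∀ c : ℝ, μ (c • f) = c * μ f) ∧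
  (∃ C : ℝ, ∀ f ∈ Ub u, ∀ B : ℝ, (∀ x, |f x| ≤ B) → |μ f| ≤ C * B) ∧
  (∀ H : Set (S → ℝ), H ⊆ Ub u → IsUEB u H → ContinuousOn μ H)

open Uniformity

section
variable {S : Type*}

/-! ### Linear functionals on vector lattices of bounded functions -/

/-- `B` is a vector lattice of bounded real functions on `S` containing the constants, under the
pointwise operations. -/
structure IsVecLat (B : Set (S → ℝ)) : Prop where
  one : (fun _ => 1) ∈ B
  add : ∀ f ∈ B, ∀ g ∈ B, f + g ∈ B
  smul : ∀ f ∈ B, ∀ c : ℝ, c • f ∈ B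
  sup : ∀ f ∈ B, ∀ g ∈ B, f ⊔ g ∈ B
  bdd : ∀ f ∈ B, ∃ C : ℝ, ∀ x, |f x| ≤ C

/-- `m` is linear on the class `B`; its values outside `B` are arbitrary. -/
def LinearOnSet (B : Set (S → ℝ)) (m : (S → ℝ) → ℝ) : Prop :=
  (∀ f ∈ B, ∀ g ∈ B, m (f + g) = m f + m g) ∧ ∀ f ∈ B, ∀ c : ℝ, m (c • f) = c * m f

/-- `g ≥ 0` and `m f ≤ c` for all `f ∈ B` with `|f| ≤ g`. When `g ∈ B` and `m` is linear and
order bounded this says `|m|(g) ≤ c`; phrasing it as a bound avoids constructing the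
modulus `|m|`. -/
def DomBy (B : Set (S → ℝ)) (m : (S → ℝ) → ℝ) (g : S → ℝ) (c : ℝ) : Prop :=
  (∀ x, 0 ≤ g x) ∧ ∀ f ∈ B, (∀ x, |f x| ≤ g x) → m f ≤ c

namespace IsVecLat
variable {B : Set (S → ℝ)}

lemma neg (hB : IsVecLat B) {f : S → ℝ} (hf : f ∈ B) : -f ∈ B := by
  simpa using hB.smul f hf (-1)

lemma sub (hB : IsVecLat B) {f g : S → ℝ} (hf : f ∈ B) (hg : g ∈ B) : f - g ∈ B := by
  rw [sub_eq_add_neg]; exact hB.add _ hf _ (hB.neg hg)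

lemma inf (hB : IsVecLat B) {f g : S → ℝ} (hf : f ∈ B) (hg : g ∈ B) : f ⊓ g ∈ B := by
  have := hB.neg (hB.sup _ (hB.neg hf) _ (hB.neg hg))
  simpa [neg_sup] using this

lemma const (hB : IsVecLat B) (c : ℝ) : (fun _ => c) ∈ B := by
  have := hB.smul _ hB.one c
  convert this using 1
  ext x; simp

end IsVecLat

lemma LinearOnSet.zero {B : Set (S → ℝ)} (hB : IsVecLat B) {m : (S → ℝ) → ℝ}
    (hm : LinearOnSet B m) : m 0 = 0 := by
  have := hm.2 _ hB.one 0
  simpa using this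

lemma LinearOnSet.neg {B : Set (S → ℝ)} {m : (S → ℝ) → ℝ}
    (hm : LinearOnSet B m) {f : S → ℝ} (hf : f ∈ B) : m (-f) = - m f := by
  have := hm.2 f hf (-1)
  simpa using this

lemma LinearOnSet.sub {B : Set (S → ℝ)} (hB : IsVecLat B) {m : (S → ℝ) → ℝ}
    (hm : LinearOnSet B m) {f g : S → ℝ} (hf : f ∈ B) (hg : g ∈ B) : m (f - g) = m f - m g := by
  rw [sub_eq_add_neg, hm.1 f hf _ (hB.neg hg), hm.neg hg, sub_eq_add_neg]

namespace DomBy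
variable {B : Set (S → ℝ)} {m : (S → ℝ) → ℝ} {g g' : S → ℝ} {c c' : ℝ}

lemma abs_le (hB : IsVecLat B) (hm : LinearOnSet B m) (h : DomBy B m g c) {f : S → ℝ}
    (hf : f ∈ B) (hfg : ∀ x, |f x| ≤ g x) : |m f| ≤ c := by
  have h1 := h.2 f hf hfg
  have h2 := h.2 (-f) (hB.neg hf) (by simpa using hfg)
  rw [hm.neg hf] at h2
  rw [_root_.abs_le]; constructor <;> linarith

lemma nonneg (hB : IsVecLat B) (hm : LinearOnSet B m) (h : DomBy B m g c) : 0 ≤ c := by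
  have h0 : (0 : S → ℝ) ∈ B := hB.const 0
  have := h.2 0 h0 (by simpa using h.1)
  rwa [hm.zero hB] at this

/-- Riesz decomposition in `ℝ`: the part of `s` clamped to `[-a, a]`, and the remainder. -/
lemma clamp_bounds {s a b : ℝ} (ha : 0 ≤ a) (hb : 0 ≤ b) (h : |s| ≤ a + b) :
    |max (-a) (min s a)| ≤ a ∧ |s - max (-a) (min s a)| ≤ b := by
  grind

/-- Subadditivity of the modulus of `m`, by splitting `|f| ≤ g + g'` into a piece bounded by `g`
and a piece bounded by `g'`. -/
lemma add (hB : IsVecLat B) (hm : LinearOnSet B m) (hg : g ∈ B)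
    (h : DomBy B m g c) (h' : DomBy B m g' c') : DomBy B m (g + g') (c + c') := by
  refine ⟨fun x => add_nonneg (h.1 x) (h'.1 x), fun f hf hfg => ?_⟩
  set f₁ : S → ℝ := (-g) ⊔ (f ⊓ g) with hf₁
  have hmem : f₁ ∈ B := hB.sup _ (hB.neg hg) _ (hB.inf hf hg)
  have hb := fun x => clamp_bounds (h.1 x) (h'.1 x) (hfg x)
  have e1 := h.2 f₁ hmem fun x => (hb x).1
  have e2 := h'.2 (f - f₁) (hB.sub hf hmem) fun x => (hb x).2
  rw [hm.sub hB hf hmem] at e2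
  linarith

lemma smul (hB : IsVecLat B) (hm : LinearOnSet B m) {r : ℝ} (hr : 0 ≤ r)
    (h : DomBy B m g c) : DomBy B m (r • g) (r * c) := by
  refine ⟨fun x => mul_nonneg hr (h.1 x), fun f hf hfg => ?_⟩
  rcases hr.eq_or_lt with rfl | hr
  · have : f = 0 := by
      ext x; simpa using hfg x
    rw [this, hm.zero hB]; simp
  · have := h.2 (r⁻¹ • f) (hB.smul _ hf _) fun x => by
      have := hfg x
      simp only [Pi.smul_apply, smul_eq_mul] at this ⊢
      rw [abs_mul, abs_of_pos (inv_pos.2 hr)]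
      rwa [inv_mul_le_iff₀ hr]
    rw [hm.2 f hf] at this
    rwa [inv_mul_le_iff₀ hr] at this

end DomBy

/-- The space of bounded real functions on `S`. -/
def bddFun (S : Type*) : Submodule ℝ (S → ℝ) where
  carrier := {f | ∃ C : ℝ, ∀ x, |f x| ≤ C}
  zero_mem' := ⟨0, by simp⟩
  add_mem' := by
    rintro f g ⟨C, hC⟩ ⟨D, hD⟩
    exact ⟨C + D, fun x => (abs_add_le _ _).trans (add_le_add (hC x) (hD x))⟩
  smul_mem' := by
    rintro c f ⟨C, hC⟩
    refine ⟨|c| * C, fun x => ?_⟩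
    simp only [Pi.smul_apply, smul_eq_mul, abs_mul]
    exact mul_le_mul_of_nonneg_left (hC x) (abs_nonneg _)

lemma bddFun_isVecLat : IsVecLat (bddFun S : Set (S → ℝ)) where
  one := ⟨1, by simp⟩
  add f hf g hg := (bddFun S).add_mem hf hg
  smul f hf c := (bddFun S).smul_mem c hf
  sup := by
    rintro f ⟨C, hC⟩ g ⟨D, hD⟩
    exact ⟨max C D, fun x => (abs_max_le_max_abs_abs).trans (max_le_max (hC x) (hD x))⟩
  bdd f hf := hf

/-- A linear functional on a vector lattice `A` extends to all bounded functions with no loss in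
any of the estimates `DomBy A m g c`, `g ∈ A`. This is Hahn–Banach for the sublinear functional
`N f = inf {c | |f| ≤ g for some g ∈ A with DomBy A m g c}`. -/
lemma exists_dominated_extension {A : Set (S → ℝ)} (hA : IsVecLat A) {m : (S → ℝ) → ℝ}
    (hm : LinearOnSet A m) {C : ℝ} (hC : DomBy A m (fun _ => 1) C) :
    ∃ ν : (S → ℝ) → ℝ, LinearOnSet (bddFun S : Set (S → ℝ)) ν ∧ (∀ f ∈ A, ν f = m f) ∧
      ∀ g ∈ A, ∀ c, DomBy A m g c → DomBy (bddFun S : Set (S → ℝ)) ν g c := by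
  classical
  let E := bddFun S
  let T : E → Set ℝ := fun f => {c | ∃ g ∈ A, DomBy A m g c ∧ ∀ x, |f.1 x| ≤ g x}
  have hTb : ∀ f, BddBelow (T f) := fun f => ⟨0, by
    rintro c ⟨g, -, hg, -⟩; exact hg.nonneg hA hm⟩
  have hTn : ∀ f, (T f).Nonempty := by
    rintro ⟨f, D, hD⟩
    have h0 : ∀ x, |f x| ≤ |D| := fun x => (hD x).trans (le_abs_self D)
    exact ⟨|D| * C, _, hA.smul _ hA.one |D|, hC.smul hA hm (abs_nonneg D), by simpa using h0⟩
  let N : E → ℝ := fun f => sInf (T f)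
  have hsm : ∀ r : ℝ, 0 < r → ∀ f : E, N (r • f) ≤ r * N f := by
    intro r hr f
    rw [← inv_mul_le_iff₀ hr]
    refine le_csInf (hTn f) ?_
    rintro c ⟨g, hg, hgc, hfg⟩
    rw [inv_mul_le_iff₀ hr]
    refine csInf_le (hTb _) ⟨r • g, hA.smul _ hg _, hgc.smul hA hm hr.le, fun x => ?_⟩
    simp only [Submodule.coe_smul, Pi.smul_apply, smul_eq_mul, abs_mul, abs_of_pos hr]
    exact mul_le_mul_of_nonneg_left (hfg x) hr.le
  let A' : Submodule ℝ E :=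
    { carrier := {f | f.1 ∈ A}
      zero_mem' := hA.const 0
      add_mem' := fun {f g} hf hg => hA.add _ hf _ hg
      smul_mem' := fun c f hf => hA.smul _ hf c }
  let m' : A' →ₗ[ℝ] ℝ :=
    { toFun := fun f => m f.1.1
      map_add' := fun f g => hm.1 _ f.2 _ g.2
      map_smul' := fun c f => hm.2 _ f.2 c }
  obtain ⟨L, hL1, hL2⟩ := exists_extension_of_le_sublinear ⟨A', m'⟩ N
    (by
      intro r hr f
      refine le_antisymm (hsm r hr f) ?_
      have := hsm r⁻¹ (inv_pos.2 hr) (r • f)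
      rw [smul_smul, inv_mul_cancel₀ hr.ne', one_smul] at this
      rwa [le_inv_mul_iff₀ hr] at this)
    (by
      intro f f'
      rw [← sub_le_iff_le_add]
      refine le_csInf (hTn f) ?_
      rintro c ⟨g, hg, hgc, hfg⟩
      rw [sub_le_comm]
      refine le_csInf (hTn f') ?_
      rintro c' ⟨g', hg', hgc', hfg'⟩
      rw [sub_le_iff_le_add']
      exact csInf_le (hTb _) ⟨g + g', hA.add _ hg _ hg', hgc.add hA hm hg hgc',
        fun x => (abs_add_le _ _).trans (add_le_add (hfg x) (hfg' x))⟩)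
    (by
      intro f
      refine le_csInf (hTn _) ?_
      rintro c ⟨g, hg, hgc, hfg⟩
      exact hgc.2 _ f.2 hfg)
  refine ⟨fun f => if h : f ∈ bddFun S then L ⟨f, h⟩ else 0, ⟨?_, ?_⟩, ?_, ?_⟩
  · intro f hf g hg
    have hf' : f ∈ bddFun S := hf
    have hg' : g ∈ bddFun S := hg
    simp only [hf', hg', (bddFun S).add_mem hf' hg', dif_pos]
    exact L.map_add ⟨f, hf⟩ ⟨g, hg⟩
  · intro f hf c
    have hf' : f ∈ bddFun S := hf
    simp only [hf', (bddFun S).smul_mem c hf', dif_pos]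
    exact L.map_smul c ⟨f, hf⟩
  · intro f hf
    have hf' : f ∈ bddFun S := hA.bdd f hf
    simp only [hf', dif_pos]
    exact hL1 ⟨⟨f, hf'⟩, hf⟩
  · intro g hg c hgc
    refine ⟨hgc.1, fun f hf hfg => ?_⟩
    have hf' : f ∈ bddFun S := hf
    simp only [hf', dif_pos]
    exact (hL2 _).trans (csInf_le (hTb _) ⟨g, hg, hgc, hfg⟩)

/-! ### The spaces `Ub u` -/

lemma mem_Ub_iff {u : UniformSpace S} {f : S → ℝ} :
    f ∈ Ub u ↔ (∀ ε > 0, ∀ᶠ p in @uniformity S u, |f p.1 - f p.2| < ε) ∧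
      ∃ C : ℝ, ∀ x, |f x| ≤ C := by
  unfold Ub
  simp only [Set.mem_ofPred_eq]
  refine and_congr_left fun _ => ?_
  rw [UniformContinuous, Metric.uniformity_basis_dist.tendsto_right_iff]
  rfl

lemma isUEB_iff {u : UniformSpace S} {H : Set (S → ℝ)} :
    IsUEB u H ↔ (∀ ε > 0, ∀ᶠ p in @uniformity S u, ∀ f ∈ H, |f p.1 - f p.2| < ε) ∧
      ∃ C : ℝ, ∀ f ∈ H, ∀ x, |f x| ≤ C := by
  unfold IsUEB
  refine and_congr_left fun _ => ?_
  rw [Metric.uniformity_basis_dist.uniformEquicontinuous_iff_right]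
  simp [Real.dist_eq]

lemma Ub_isVecLat (u : UniformSpace S) : IsVecLat (Ub u) where
  one := mem_Ub_iff.2 ⟨fun ε hε => by simp [hε], bddFun_isVecLat.one⟩
  add f hf g hg := by
    rw [mem_Ub_iff] at *
    refine ⟨fun ε hε => ?_, bddFun_isVecLat.add f hf.2 g hg.2⟩
    filter_upwards [hf.1 _ (half_pos hε), hg.1 _ (half_pos hε)] with p h1 h2
    simp only [Pi.add_apply]
    grind
  smul f hf c := by
    rw [mem_Ub_iff] at *
    refine ⟨fun ε hε => ?_, bddFun_isVecLat.smul f hf.2 c⟩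
    filter_upwards [hf.1 (ε / (|c| + 1)) (by positivity)] with p h1
    simp only [Pi.smul_apply, smul_eq_mul]
    rw [← mul_sub, abs_mul]
    rw [lt_div_iff₀ (by positivity)] at h1
    nlinarith [abs_nonneg (f p.1 - f p.2)]
  sup f hf g hg := by
    rw [mem_Ub_iff] at *
    refine ⟨fun ε hε => ?_, bddFun_isVecLat.sup f hf.2 g hg.2⟩
    filter_upwards [hf.1 _ hε, hg.1 _ hε] with p h1 h2
    simp only [Pi.sup_apply]
    exact (abs_max_sub_max_le_max _ _ _ _).trans_lt (max_lt h1 h2)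
  bdd f hf := hf.2

lemma IsVecLat.inter {A B : Set (S → ℝ)} (hA : IsVecLat A) (hB : IsVecLat B) :
    IsVecLat (A ∩ B) where
  one := ⟨hA.one, hB.one⟩
  add f hf g hg := ⟨hA.add f hf.1 g hg.1, hB.add f hf.2 g hg.2⟩
  smul f hf c := ⟨hA.smul f hf.1 c, hB.smul f hf.2 c⟩
  sup f hf g hg := ⟨hA.sup f hf.1 g hg.1, hB.sup f hf.2 g hg.2⟩
  bdd f hf := hA.bdd f hf.1

namespace IsPseudometric
variable {d : S → S → ℝ}

lemma nonneg (hd : IsPseudometric d) (x y : S) : 0 ≤ d x y := by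
  have h1 := hd.2.2 x y x
  rw [hd.1, hd.2.1 y x] at h1
  linarith

lemma abs_sub_le (hd : IsPseudometric d) (x y z : S) : |d x z - d y z| ≤ d x y := by
  have h1 := hd.2.2 x y z
  have h2 := hd.2.2 y x z
  rw [hd.2.1 y x] at h2
  rw [abs_le]; constructor <;> linarith

end IsPseudometric

/-! ### Tightness of uniform measures -/

/-- The `1`-Lipschitz function `max (0, 1 - d(x, F))`, equal to `1` on the finite set `F` and
vanishing off the `d`-neighbourhood of `F` of radius `1`; it is `0` for `F = ∅`. -/
noncomputable def bump (d : S → S → ℝ) (F : Finset S) (x : S) : ℝ :=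
  F.fold max 0 fun a => 1 - d x a

section bump
variable {d : S → S → ℝ} (F : Finset S)

lemma bump_nonneg (x : S) : 0 ≤ bump d F x :=
  (Finset.le_fold_max _).2 (Or.inl le_rfl)

lemma exists_of_bump_pos {x : S} (h : 0 < bump d F x) : ∃ a ∈ F, d x a < 1 := by
  rcases (Finset.lt_fold_max _).1 h with h | ⟨a, ha, h⟩
  · exact absurd h (lt_irrefl _)
  · exact ⟨a, ha, by linarith⟩

lemma bump_mono {F G : Finset S} (h : F ⊆ G) (x : S) : bump d F x ≤ bump d G x :=
  (Finset.fold_max_le _).2 ⟨bump_nonneg _ x, fun a ha =>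
    (Finset.le_fold_max _).2 (Or.inr ⟨a, h ha, le_rfl⟩)⟩

lemma bump_le_one (hd : IsPseudometric d) (x : S) : bump d F x ≤ 1 :=
  (Finset.fold_max_le _).2 ⟨zero_le_one, fun a _ => by linarith [hd.nonneg x a]⟩

lemma bump_eq_one (hd : IsPseudometric d) {x : S} (h : x ∈ F) : bump d F x = 1 :=
  le_antisymm (bump_le_one F hd x)
    ((Finset.le_fold_max _).2 (Or.inr ⟨x, h, by rw [hd.1]; simp⟩))

lemma abs_bump_sub_le (hd : IsPseudometric d) (x y : S) :
    |bump d F x - bump d F y| ≤ d x y := by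
  have key : ∀ x y, bump d F x ≤ bump d F y + d x y := fun x y =>
    (Finset.fold_max_le _).2 ⟨add_nonneg (bump_nonneg F y) (hd.nonneg x y), fun a ha => by
      have h1 : 1 - d y a ≤ bump d F y := (Finset.le_fold_max _).2 (Or.inr ⟨a, ha, le_rfl⟩)
      have h2 := hd.2.2 y x a
      rw [hd.2.1 y x] at h2
      linarith⟩
  have h1 := key x y
  have h2 := key y x
  rw [hd.2.1 y x] at h2
  rw [abs_le]; constructor <;> linarith

lemma bump_mem {A : Set (S → ℝ)} (hA : IsVecLat A)
    (h : ∀ a, (fun x => max 0 (1 - d x a)) ∈ A) : bump d F ∈ A := by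
  classical
  induction F using Finset.induction_on with
  | empty => exact hA.const 0
  | insert a F ha ih =>
    convert hA.sup _ (h a) _ ih using 1
    ext x
    have := bump_nonneg (d := d) F x
    simp only [bump, Pi.sup_apply, Finset.fold_insert ha] at *
    grind

end bump

/-- A uniform measure is tight with respect to each uniformly continuous pseudometric `d`: up to
`ε`, the modulus `|μ|` lives on the `d`-neighbourhood of radius `1` of some finite set. The
functions `bump d F` increase with `F`, so `|μ|(bump d F)` almost attains its supremum at some
`F₀`, and then `|μ|(bump d F - bump d F₀)` is small for all `F ⊇ F₀`. If `|f| ≤ 1 - bump d F₀`,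
the truncations of `f` by `bump d F - bump d F₀` converge to `f` pointwise inside a UEB set, so
continuity of `μ` on that set carries the bound over to `μ f`. -/
lemma exists_tight {u : UniformSpace S} {μ : (S → ℝ) → ℝ} (hμ : IsUniformMeasure u μ)
    {d : S → S → ℝ} (hd : IsPseudometric d)
    (hdu : ∀ ε > 0, ∀ᶠ p in @uniformity S u, d p.1 p.2 < ε) {ε : ℝ} (hε : 0 < ε) :
    ∃ F : Finset S, DomBy (Ub u) μ (fun x => 1 - bump d F x) ε := by
  classical
  obtain ⟨hadd, hsmul, ⟨C, hC⟩, hcont⟩ := hμ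
  have hU := Ub_isVecLat u
  have hlin : LinearOnSet (Ub u) μ := ⟨hadd, hsmul⟩
  -- `sSup T` plays the role of the supremum over `F` of `|μ|(bump d F)`.
  let T : Set ℝ := {t | ∃ F : Finset S, ∃ f ∈ Ub u, (∀ x, |f x| ≤ bump d F x) ∧ t = μ f}
  have hTb : BddAbove T := ⟨C * 1, by
    rintro t ⟨F, f, hf, hfF, rfl⟩
    exact (le_abs_self _).trans (hC f hf 1 fun x => (hfF x).trans (bump_le_one F hd x))⟩
  have hTn : T.Nonempty := ⟨μ 0, ∅, 0, hU.const 0, fun x => by simpa using bump_nonneg ∅ x, rfl⟩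
  obtain ⟨-, ⟨F₀, f₀, hf₀, hfF₀, rfl⟩, hlt⟩ :=
    exists_lt_of_lt_csSup hTn (sub_lt_self (sSup T) hε)
  have hincr : ∀ F, F₀ ⊆ F → ∀ f ∈ Ub u, (∀ x, |f x| ≤ bump d F x - bump d F₀ x) → μ f ≤ ε := by
    intro F hF f hf hfb
    have : μ (f₀ + f) ≤ sSup T := le_csSup hTb ⟨F, f₀ + f, hU.add _ hf₀ _ hf, fun x => by
      have := abs_add_le (f₀ x) (f x)
      have := hfF₀ x
      have := hfb x
      simp only [Pi.add_apply]
      linarith, rfl⟩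
    rw [hadd _ hf₀ _ hf] at this
    linarith
  refine ⟨F₀, fun x => by linarith [bump_le_one F₀ hd x], fun f hf hfb => ?_⟩
  let g : Finset S → S → ℝ := fun F x => bump d (F₀ ∪ F) x - bump d F₀ x
  let k : Finset S → S → ℝ := fun F x => max (-(g F x)) (min (f x) (g F x))
  have hg0 : ∀ F x, 0 ≤ g F x := fun F x =>
    sub_nonneg.2 (bump_mono Finset.subset_union_left x)
  let H : Set (S → ℝ) :=
    {h | (∀ x y, |h x - h y| ≤ |f x - f y| + 2 * d x y) ∧ ∀ x, |h x| ≤ 1}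
  have hfH : f ∈ H := ⟨fun x y => by linarith [hd.nonneg x y], fun x => by
    linarith [hfb x, bump_nonneg (d := d) F₀ x]⟩
  have hkH : ∀ F, k F ∈ H := by
    refine fun F => ⟨fun x y => ?_, fun x => ?_⟩
    · have h1 := abs_bump_sub_le (F₀ ∪ F) hd x y
      have h2 := abs_bump_sub_le F₀ hd x y
      have h3 : |g F x - g F y| ≤ 2 * d x y := by
        simp only [g]; grind
      have h4 := abs_nonneg (f x - f y)
      have e1 : |k F x - k F y| ≤ max |-(g F x) - -(g F y)| |min (f x) (g F x) - min (f y) (g F y)| :=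
        abs_max_sub_max_le_max _ _ _ _
      have e2 := abs_min_sub_min_le_max (f x) (g F x) (f y) (g F y)
      refine e1.trans (max_le ?_ (e2.trans (max_le ?_ ?_)))
      · rw [neg_sub_neg, abs_sub_comm]; linarith
      · linarith [abs_nonneg (g F x - g F y)]
      · linarith
    · have h0 := hg0 F x
      have h1 : g F x ≤ 1 := by
        have := bump_le_one (F₀ ∪ F) hd x
        have := bump_nonneg (d := d) F₀ x
        simp only [g]; linarith
      simp only [k]
      grind
  have hHev : ∀ ε > 0, ∀ᶠ p in @uniformity S u, ∀ h ∈ H, |h p.1 - h p.2| < ε := by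
    intro ε hε
    filter_upwards [(mem_Ub_iff.1 hf).1 _ (half_pos hε), hdu (ε / 4) (by positivity)]
      with p h1 h2 h hh
    linarith [hh.1 p.1 p.2]
  have hHU : H ⊆ Ub u := fun h hh => mem_Ub_iff.2
    ⟨fun ε hε => (hHev ε hε).mono fun p hp => hp h hh, 1, hh.2⟩
  have hc := hcont H hHU (isUEB_iff.2 ⟨hHev, 1, fun h hh => hh.2⟩) f hfH
  have hk : Tendsto k atTop (𝓝[H] f) := by
    refine tendsto_nhdsWithin_iff.2 ⟨tendsto_pi_nhds.2 fun x => ?_, .of_forall hkH⟩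
    refine tendsto_const_nhds.congr' ?_
    filter_upwards [eventually_ge_atTop {x}] with F hF
    have hx : x ∈ F₀ ∪ F := Finset.mem_union_right _ (hF (Finset.mem_singleton_self x))
    have := hfb x
    simp only [k, g, bump_eq_one _ hd hx]
    grind
  refine le_of_tendsto (hc.tendsto.comp hk) (.of_forall fun F => ?_)
  refine hincr (F₀ ∪ F) Finset.subset_union_left _ (hHU (hkH F)) fun x => ?_
  have := hg0 F x
  simp only [k, g] at *
  grind

/-- Near the finite set `F`, a bounded function that varies by less than `ε` on `d`-balls of
radius `2` is uniformly approximated by members of a lattice containing the truncated functions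
`d(·, a)`. The upper bound `g ≤ f + ε` holds everywhere. -/
lemma exists_approx {A : Set (S → ℝ)} (hA : IsVecLat A) {d : S → S → ℝ}
    (h : ∀ a, (fun x => max 0 (2 - d x a)) ∈ A) {f : S → ℝ} {C ε : ℝ} (hε : 0 ≤ ε)
    (hf : ∀ x, |f x| ≤ C) (hfd : ∀ x y, d x y < 2 → |f x - f y| < ε) (F : Finset S) :
    ∃ g ∈ A, ∀ x, -C ≤ g x ∧ g x ≤ C ∧ g x ≤ f x + ε ∧
      ∀ a ∈ F, d x a < 1 → f x - ε ≤ g x := by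
  classical
  induction F using Finset.induction_on with
  | empty =>
    refine ⟨_, hA.const (-C), fun x => ?_⟩
    have := abs_le.1 (hf x)
    exact ⟨le_rfl, by linarith, by linarith, by simp⟩
  | insert a F ha ih =>
    obtain ⟨g, hg, hgx⟩ := ih
    -- The new term goes from `-C`, where `d x a ≥ 2`, up to `f a`, where `d x a ≤ 1`.
    refine ⟨_, hA.sup _ hg _ (hA.add _ (hA.const (-C)) _
      (hA.smul _ (hA.inf (hA.const 1) (h a)) (f a + C))), fun x => ?_⟩
    obtain ⟨h1, h2, h3, h4⟩ := hgx x
    have hfa := abs_le.1 (hf a)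
    have hfx := abs_le.1 (hf x)
    simp only [Pi.sup_apply, Pi.add_apply, Pi.smul_apply, Pi.inf_apply, smul_eq_mul]
    set t := min 1 (max 0 (2 - d x a)) with ht
    have ht0 : 0 ≤ t := by grind
    have ht1 : t ≤ 1 := by grind
    have hk : -C + (f a + C) * t ≤ f a := by nlinarith
    refine ⟨le_max_of_le_left h1, max_le h2 (by linarith), max_le h3 ?_, ?_⟩
    · by_cases hda : d x a < 2
      · linarith [abs_lt.1 (hfd x a hda)]
      · have : t = 0 := by grind
        rw [this]; linarith
    · intro b hb hbd
      rcases Finset.mem_insert.1 hb with rfl | hb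
      · have : t = 1 := by grind
        rw [this]
        refine le_max_of_le_right ?_
        linarith [abs_lt.1 (hfd x b (by linarith))]
      · exact le_max_of_le_left (h4 b hb hbd)

/-! ### Pseudometrics satisfying the crossed condition -/

/-- A pseudometric that is uniformly continuous for `u` and whose functions `d(·, z)` are
uniformly continuous for `u'`. -/
structure CrossedPseudometric (u u' : UniformSpace S) (d : S → S → ℝ) : Prop where
  pseudo : IsPseudometric d
  small : ∀ ε > 0, ∀ᶠ p in @uniformity S u, d p.1 p.2 < ε
  crossed : ∀ z, ∀ ε > 0, ∀ᶠ p in @uniformity S u', |d p.1 z - d p.2 z| < ε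

namespace CrossedPseudometric
variable {u u' : UniformSpace S} {d d' : S → S → ℝ}

lemma zero : CrossedPseudometric u u' (fun _ _ => 0) :=
  ⟨by simp [IsPseudometric], fun ε hε => by simp [hε], fun z ε hε => by simp [hε]⟩

lemma add (h : CrossedPseudometric u u' d) (h' : CrossedPseudometric u u' d') :
    CrossedPseudometric u u' (fun x y => d x y + d' x y) := by
  refine ⟨⟨fun x => ?_, fun x y => ?_, fun x y z => ?_⟩, fun ε hε => ?_, fun z ε hε => ?_⟩
  · simp [h.pseudo.1, h'.pseudo.1]
  · simp only [h.pseudo.2.1 x y, h'.pseudo.2.1 x y]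
  · linarith [h.pseudo.2.2 x y z, h'.pseudo.2.2 x y z]
  · filter_upwards [h.small _ (half_pos hε), h'.small _ (half_pos hε)] with p h1 h2
    linarith
  · filter_upwards [h.crossed z _ (half_pos hε), h'.crossed z _ (half_pos hε)] with p h1 h2
    grind

lemma smul (h : CrossedPseudometric u u' d) {r : ℝ} (hr : 0 < r) :
    CrossedPseudometric u u' (fun x y => r * d x y) := by
  refine ⟨⟨fun x => ?_, fun x y => ?_, fun x y z => ?_⟩, fun ε hε => ?_, fun z ε hε => ?_⟩
  · simp [h.pseudo.1]
  · simp only [h.pseudo.2.1 x y]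
  · dsimp only; rw [← mul_add]; exact mul_le_mul_of_nonneg_left (h.pseudo.2.2 x y z) hr.le
  · filter_upwards [h.small _ (div_pos hε hr)] with p h1
    rwa [lt_div_iff₀' hr] at h1
  · filter_upwards [h.crossed z _ (div_pos hε hr)] with p h1
    rwa [← mul_sub, abs_mul, abs_of_pos hr, ← lt_div_iff₀' hr]

lemma trunc_mem (h : CrossedPseudometric u u' d) {c : ℝ} (hc : 0 ≤ c) (a : S) :
    (fun x => max 0 (c - d x a)) ∈ Ub u ∩ Ub u' := by
  have hb : ∃ C : ℝ, ∀ x, |max 0 (c - d x a)| ≤ C := ⟨c, fun x => by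
    have := h.pseudo.nonneg x a
    grind⟩
  refine ⟨mem_Ub_iff.2 ⟨fun ε hε => ?_, hb⟩, mem_Ub_iff.2 ⟨fun ε hε => ?_, hb⟩⟩
  · filter_upwards [h.small ε hε] with p hp
    have := h.pseudo.abs_sub_le p.1 p.2 a
    grind
  · filter_upwards [h.crossed a ε hε] with p hp
    grind

end CrossedPseudometric

/-- Sums and positive multiples of crossed pseudometrics are crossed, so those generated by `P`
form a base: each entourage of `u` contains a ball `{d < 2}` with `d` crossed. -/
lemma exists_crossedPseudometric {P : Set (S → S → ℝ)} (hP : ∀ d ∈ P, IsPseudometric d)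
    {u u' : UniformSpace S} (hu : @uniformity S u = pseudometricUniformity P)
    (hfun : ∀ d ∈ P, ∀ z : S, @UniformContinuous S ℝ u' _ fun x => d x z)
    {V : Set (S × S)} (hV : V ∈ @uniformity S u) :
    ∃ d, CrossedPseudometric u u' d ∧ ∀ x y, d x y < 2 → (x, y) ∈ V := by
  let G : Filter (S × S) :=
    { sets := {V | ∃ d, CrossedPseudometric u u' d ∧ ∀ x y, d x y < 2 → (x, y) ∈ V}
      univ_sets := ⟨_, CrossedPseudometric.zero, fun _ _ _ => trivial⟩
      sets_of_superset := by
        rintro V W ⟨d, hd, h⟩ hVW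
        exact ⟨d, hd, fun x y hxy => hVW (h x y hxy)⟩
      inter_sets := by
        rintro V W ⟨d, hd, h⟩ ⟨d', hd', h'⟩
        exact ⟨_, hd.add hd', fun x y hxy =>
          ⟨h x y (by linarith [hd'.pseudo.nonneg x y]),
            h' x y (by linarith [hd.pseudo.nonneg x y])⟩⟩ }
  suffices hG : G ≤ @uniformity S u from hG hV
  rw [hu, pseudometricUniformity]
  refine le_iInf₂ fun d hd => le_iInf₂ fun ε hε => le_principal_iff.2 ?_
  have hε' : (0 : ℝ) < ε := hε
  have hdc : CrossedPseudometric u u' d := by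
    refine ⟨hP d hd, fun η hη => ?_, fun z η hη => ?_⟩
    · rw [hu]
      exact mem_iInf_of_mem d (mem_iInf_of_mem hd
        (mem_iInf_of_mem η (mem_iInf_of_mem hη (mem_principal_self _))))
    · have := hfun d hd z
      rw [UniformContinuous, Metric.uniformity_basis_dist.tendsto_right_iff] at this
      exact this η hη
  refine ⟨_, hdc.smul (r := 2 / ε) (by positivity), fun x y hxy => ?_⟩
  change d x y < ε
  rw [div_mul_eq_mul_div, div_lt_iff₀ hε'] at hxy
  linarith

lemma IsUniformMeasure.domBy_one {u : UniformSpace S} {μ : (S → ℝ) → ℝ}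
    (hμ : IsUniformMeasure u μ) : ∃ C, DomBy (Ub u) μ (fun _ => 1) C := by
  obtain ⟨-, -, ⟨C, hC⟩, -⟩ := hμ
  exact ⟨C, fun _ => zero_le_one, fun f hf h => by
    simpa using (le_abs_self _).trans (hC f hf 1 h)⟩

lemma DomBy.mono {A B : Set (S → ℝ)} {m m' : (S → ℝ) → ℝ} {g : S → ℝ} {c : ℝ}
    (h : DomBy B m g c) (hAB : A ⊆ B) (hm : ∀ f ∈ A, m' f = m f) : DomBy A m' g c :=
  ⟨h.1, fun f hf hfg => by rw [hm f hf]; exact h.2 f (hAB hf) hfg⟩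

/-! ### Properties of the dominated extension -/

/-- A dominated extension `ν` of the restriction of `μ` to `A = Ub u ∩ Ub u'` agrees with `μ` on
all of `Ub u`. Given `f ∈ Ub u`, choose `F` by tightness of `μ` and `g ∈ A` close to `f` near
`F`. Then `|f - g| ≤ ε + 2C(1 - bump d F)`, which makes both `μ (f - g)` and `ν (f - g)` small,
while `ν g = μ g`. -/
lemma extension_eq {u u' : UniformSpace S} {A : Set (S → ℝ)} (hA : IsVecLat A)
    (hAu : A = Ub u ∩ Ub u') {μ ν : (S → ℝ) → ℝ} (hμ : IsUniformMeasure u μ)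
    (hν : LinearOnSet (bddFun S : Set (S → ℝ)) ν) (hνμ : ∀ f ∈ A, ν f = μ f)
    (hdom : ∀ g ∈ A, ∀ c, DomBy A μ g c → DomBy (bddFun S : Set (S → ℝ)) ν g c)
    (hd : ∀ V ∈ @uniformity S u, ∃ d, CrossedPseudometric u u' d ∧
      ∀ x y, d x y < 2 → (x, y) ∈ V)
    {f : S → ℝ} (hf : f ∈ Ub u) : ν f = μ f := by
  have hU := Ub_isVecLat u
  have hμl : LinearOnSet (Ub u) μ := ⟨hμ.1, hμ.2.1⟩
  have hAU : A ⊆ Ub u := hAu ▸ Set.inter_subset_left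
  obtain ⟨M, hM⟩ := hμ.domBy_one
  obtain ⟨C₀, hC₀⟩ := hU.bdd f hf
  set C := |C₀|
  have hC : ∀ x, |f x| ≤ C := fun x => (hC₀ x).trans (le_abs_self _)
  have hCn : 0 ≤ C := abs_nonneg _
  have key : ∀ ε > 0, |ν f - μ f| ≤ ε * (2 * (M + 2 * C)) := by
    intro ε hε
    obtain ⟨d, hdc, hdV⟩ := hd _ ((mem_Ub_iff.1 hf).1 ε hε)
    obtain ⟨F, hF⟩ := exists_tight hμ hdc.pseudo hdc.small hε
    have htr : ∀ c : ℝ, 0 ≤ c → ∀ a, (fun x => max 0 (c - d x a)) ∈ A := fun c hc a =>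
      hAu ▸ hdc.trunc_mem hc a
    obtain ⟨g, hg, hgx⟩ := exists_approx hA (htr 2 zero_le_two) hε.le hC hdV F
    have hq : (fun x => 1 - bump d F x) ∈ A :=
      hA.sub hA.one (bump_mem F hA (htr 1 zero_le_one))
    have hD := (hM.smul hU hμl hε.le).add hU hμl (hU.smul _ hU.one ε)
      (hF.smul hU hμl (r := 2 * C) (by positivity))
    have hDν := hdom _ (hA.add _ (hA.smul _ hA.one ε) _ (hA.smul _ hq (2 * C))) _
      (hD.mono hAU fun _ _ => rfl)
    have hb : ∀ x, |(f - g) x| ≤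
        (ε • (fun _ => 1) + (2 * C) • fun x => 1 - bump d F x : S → ℝ) x := by
      intro x
      obtain ⟨h1, h2, h3, h4⟩ := hgx x
      have hfx := abs_le.1 (hC x)
      simp only [Pi.sub_apply, Pi.add_apply, Pi.smul_apply, smul_eq_mul, mul_one]
      rcases (bump_nonneg (d := d) F x).eq_or_lt with h0 | h0
      · rw [← h0, abs_le]; constructor <;> linarith
      · obtain ⟨a, ha, hxa⟩ := exists_of_bump_pos F h0
        have := h4 a ha hxa
        have : 0 ≤ 2 * C * (1 - bump d F x) :=
          mul_nonneg (by positivity) (sub_nonneg.2 (bump_le_one F hdc.pseudo x))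
        rw [abs_le]; constructor <;> linarith
    have hgU := hAU hg
    have e1 := hD.abs_le hU hμl (hU.sub hf hgU) hb
    have e2 := hDν.abs_le bddFun_isVecLat hν
      (bddFun_isVecLat.sub (hU.bdd f hf) (hA.bdd g hg)) hb
    rw [hμl.sub hU hf hgU] at e1
    rw [hν.sub bddFun_isVecLat (hU.bdd f hf) (hA.bdd g hg), hνμ g hg] at e2
    rw [abs_le] at *
    constructor <;> linarith
  have hM0 : 0 ≤ M := hM.nonneg hU hμl
  have hlim : Tendsto (fun ε : ℝ => ε * (2 * (M + 2 * C))) (𝓝[>] 0) (𝓝 0) := by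
    have : Tendsto (fun ε : ℝ => ε * (2 * (M + 2 * C))) (𝓝 0) (𝓝 (0 * (2 * (M + 2 * C)))) :=
      (continuous_id.mul continuous_const).tendsto 0
    rw [zero_mul] at this
    exact this.mono_left nhdsWithin_le_nhds
  have h0 : |ν f - μ f| ≤ 0 :=
    ge_of_tendsto hlim (eventually_nhdsWithin_of_forall fun ε hε => key ε hε)
  exact sub_eq_zero.1 (abs_nonpos_iff.1 h0)

/-- If `ν` is tight simultaneously for pairs `d₀`, `d₁` of pseudometrics controlling the
entourages of `uv`, then it is continuous on UEB sets. For `d₀`, `d₁` adapted to the given UEB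
set, the finitely many nonempty sets `B_{d₀}(a, 1) ∩ B_{d₁}(b, 1)` with `a ∈ F₀`,
`b ∈ F₁` carry `ν` up to `ε`, and one sample point in each of them controls `f - f₀` there. -/
lemma continuousOn_of_tight {uv : UniformSpace S} {ν : (S → ℝ) → ℝ}
    (hν : LinearOnSet (bddFun S : Set (S → ℝ)) ν) {M : ℝ}
    (hM : DomBy (bddFun S : Set (S → ℝ)) ν (fun _ => 1) M)
    (ht : ∀ V ∈ @uniformity S uv, ∀ ε > 0, ∃ d₀ d₁ : S → S → ℝ, ∃ F₀ F₁ : Finset S,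
      IsPseudometric d₀ ∧ IsPseudometric d₁ ∧
      (∀ x y, d₀ x y < 2 → d₁ x y < 2 → (x, y) ∈ V) ∧
      DomBy (bddFun S : Set (S → ℝ)) ν (fun x => 1 - bump d₀ F₀ x) ε ∧
      DomBy (bddFun S : Set (S → ℝ)) ν (fun x => 1 - bump d₁ F₁ x) ε)
    {H : Set (S → ℝ)} (hH : IsUEB uv H) : ContinuousOn ν H := by
  classical
  have hB := bddFun_isVecLat (S := S)
  have hM0 : 0 ≤ M := hM.nonneg hB hν
  obtain ⟨heq, C₀, hC₀⟩ := isUEB_iff.1 hH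
  set C := |C₀|
  have hC : ∀ f ∈ H, ∀ x, |f x| ≤ C := fun f hf x => (hC₀ f hf x).trans (le_abs_self _)
  have hCn : 0 ≤ C := abs_nonneg _
  intro f₀ hf₀
  rw [ContinuousWithinAt, Metric.tendsto_nhds]
  intro η hη
  -- The estimate below gives `|ν f - ν f₀| ≤ ε * (3 * M + 4 * C)`; the summand `1` makes the
  -- inequality strict.
  set K := 3 * M + 4 * C + 1 with hK
  have hKp : 0 < K := by positivity
  set ε := η / K with hεd
  have hε : 0 < ε := div_pos hη hKp
  have hεK : ε * K = η := div_mul_cancel₀ _ hKp.ne'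
  obtain ⟨d₀, d₁, F₀, F₁, hd₀, hd₁, hV, hD₀, hD₁⟩ := ht _ (heq ε hε) ε hε
  have hy : ∀ a b : S, ∃ y, ∀ x, d₀ x a < 1 → d₁ x b < 1 → d₀ y a < 1 ∧ d₁ y b < 1 := by
    intro a b
    by_cases h : ∃ y, d₀ y a < 1 ∧ d₁ y b < 1
    · obtain ⟨y, hy⟩ := h
      exact ⟨y, fun _ _ _ => hy⟩
    · exact ⟨a, fun x h1 h2 => absurd ⟨x, h1, h2⟩ h⟩
  choose y hy using hy
  have hnear : ∀ᶠ f in 𝓝[H] f₀, ∀ p ∈ F₀ ×ˢ F₁, |f (y p.1 p.2) - f₀ (y p.1 p.2)| < ε := by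
    refine (Finset.eventually_all _).2 fun p _ => ?_
    have : Tendsto (fun f : S → ℝ => f (y p.1 p.2)) (𝓝[H] f₀) (𝓝 (f₀ (y p.1 p.2))) :=
      ((continuous_apply _).tendsto f₀).mono_left nhdsWithin_le_nhds
    exact Metric.tendsto_nhds.1 this ε hε
  filter_upwards [hnear, self_mem_nhdsWithin] with f hf hfH
  have hq : ∀ d F, IsPseudometric d → (fun x => 1 - bump d F x) ∈ (bddFun S : Set (S → ℝ)) :=
    fun d F hd => ⟨1, fun x => by
      have := bump_nonneg (d := d) F x
      have := bump_le_one F hd x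
      rw [abs_le]; constructor <;> linarith⟩
  have hD := ((hM.smul hB hν (r := 3 * ε) (by positivity)).add hB hν (hB.smul _ hB.one _)
    (hD₀.smul hB hν (r := 2 * C) (by positivity))).add hB hν
      (hB.add _ (hB.smul _ hB.one _) _ (hB.smul _ (hq _ _ hd₀) _))
    (hD₁.smul hB hν (r := 2 * C) (by positivity))
  have hfB : f ∈ (bddFun S : Set (S → ℝ)) := ⟨C, hC f hfH⟩
  have hfB₀ : f₀ ∈ (bddFun S : Set (S → ℝ)) := ⟨C, hC f₀ hf₀⟩
  have e := hD.abs_le hB hν (hB.sub hfB hfB₀) (by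
    intro x
    have h1 := abs_le.1 (hC f hfH x)
    have h2 := abs_le.1 (hC f₀ hf₀ x)
    simp only [Pi.sub_apply, Pi.add_apply, Pi.smul_apply, smul_eq_mul, mul_one]
    have p0 : 0 ≤ 2 * C * (1 - bump d₀ F₀ x) :=
      mul_nonneg (by positivity) (sub_nonneg.2 (bump_le_one F₀ hd₀ x))
    have p1 : 0 ≤ 2 * C * (1 - bump d₁ F₁ x) :=
      mul_nonneg (by positivity) (sub_nonneg.2 (bump_le_one F₁ hd₁ x))
    rcases (bump_nonneg (d := d₀) F₀ x).eq_or_lt with h0 | h0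
    · rw [← h0] at p0 ⊢; rw [abs_le]; constructor <;> linarith
    rcases (bump_nonneg (d := d₁) F₁ x).eq_or_lt with h0' | h0'
    · rw [← h0'] at p1 ⊢; rw [abs_le]; constructor <;> linarith
    obtain ⟨a, ha, hxa⟩ := exists_of_bump_pos F₀ h0
    obtain ⟨b, hb, hxb⟩ := exists_of_bump_pos F₁ h0'
    obtain ⟨hya, hyb⟩ := hy a b x hxa hxb
    have hxy : ∀ h ∈ H, |h x - h (y a b)| < ε := hV x (y a b)
      (by have := hd₀.2.2 x a (y a b); rw [hd₀.2.1 a] at this; linarith)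
      (by have := hd₁.2.2 x b (y a b); rw [hd₁.2.1 b] at this; linarith)
    have e1 := abs_lt.1 (hxy f hfH)
    have e2 := abs_lt.1 (hxy f₀ hf₀)
    have e3 := abs_lt.1 (hf (a, b) (Finset.mk_mem_product ha hb))
    simp only at e3
    rw [abs_le]; constructor <;> linarith)
  rw [hν.sub hB hfB hfB₀] at e
  rw [Real.dist_eq]
  nlinarith

end

/-- If `X₀`, `X₁` are induced by point-separating families `P₀`, `P₁` satisfying the crossed
uniform-continuity condition, and `X_∨` is induced by `P₀ ∪ P₁`, then any pair of uniform
measures `μ₀` on `X₀` and `μ₁` on `X₁` agreeing on `U_b(X₀) ∩ U_b(X₁)` comes from a common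
uniform measure `ν` on `X_∨`. -/
theorem uniform_measures_glue
    {S : Type*} (P₀ P₁ : Set (S → S → ℝ))
    (hP₀ : ∀ d ∈ P₀, IsPseudometric d) (hP₁ : ∀ d ∈ P₁, IsPseudometric d)
    (hsep₀ : SeparatesPoints' P₀) (hsep₁ : SeparatesPoints' P₁)
    (uX₀ uX₁ uXv : UniformSpace S)
    (hX₀ : @uniformity S uX₀ = pseudometricUniformity P₀)
    (hX₁ : @uniformity S uX₁ = pseudometricUniformity P₁)
    (hXv : @uniformity S uXv = pseudometricUniformity (P₀ ∪ P₁))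
    (hfun₀ : ∀ d ∈ P₀, ∀ z : S, @UniformContinuous S ℝ uX₁ _ fun x => d x z)
    (hfun₁ : ∀ d ∈ P₁, ∀ z : S, @UniformContinuous S ℝ uX₀ _ fun x => d x z)
    (μ₀ μ₁ : (S → ℝ) → ℝ)
    (hμ₀ : IsUniformMeasure uX₀ μ₀) (hμ₁ : IsUniformMeasure uX₁ μ₁)
    (hagree : ∀ g : S → ℝ, g ∈ Ub uX₀ → g ∈ Ub uX₁ → μ₀ g = μ₁ g) :
    ∃ ν : (S → ℝ) → ℝ, IsUniformMeasure uXv ν ∧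
      (∀ g ∈ Ub uX₀, ν g = μ₀ g) ∧ ∀ g ∈ Ub uX₁, ν g = μ₁ g := by
  have hA : IsVecLat (Ub uX₀ ∩ Ub uX₁) := (Ub_isVecLat uX₀).inter (Ub_isVecLat uX₁)
  have hm : LinearOnSet (Ub uX₀ ∩ Ub uX₁) μ₀ :=
    ⟨fun f hf g hg => hμ₀.1 f hf.1 g hg.1, fun f hf c => hμ₀.2.1 f hf.1 c⟩
  have hμ₁₀ : ∀ f ∈ Ub uX₀ ∩ Ub uX₁, μ₀ f = μ₁ f := fun f hf => hagree f hf.1 hf.2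
  obtain ⟨M, hM₀⟩ := hμ₀.domBy_one
  have hM := hM₀.mono (A := Ub uX₀ ∩ Ub uX₁) Set.inter_subset_left fun _ _ => rfl
  obtain ⟨ν, hν, hνA, hdom⟩ := exists_dominated_extension hA hm hM
  have hB := bddFun_isVecLat (S := S)
  have hd₀ := fun V hV => exists_crossedPseudometric hP₀ hX₀ hfun₀ (V := V) hV
  have hd₁ := fun V hV => exists_crossedPseudometric hP₁ hX₁ hfun₁ (V := V) hV
  have hν₀ : ∀ g ∈ Ub uX₀, ν g = μ₀ g := fun g hg =>
    extension_eq hA rfl hμ₀ hν hνA hdom hd₀ hg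
  have hν₁ : ∀ g ∈ Ub uX₁, ν g = μ₁ g := fun g hg =>
    extension_eq hA (Set.inter_comm _ _) hμ₁ hν (fun f hf => (hνA f hf).trans (hμ₁₀ f hf))
      (fun g hg c hc => hdom g hg c (hc.mono subset_rfl hμ₁₀)) hd₁ hg
  refine ⟨ν, ⟨fun f hf g hg => hν.1 f hf.2 g hg.2, fun f hf c => hν.2 f hf.2 c, ?_, ?_⟩, hν₀, hν₁⟩
  -- On empty `S` the norm bound is also required for negative `B`, which forces the constant `0`.
  · rcases isEmpty_or_nonempty S with hS | ⟨⟨z⟩⟩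
    · refine ⟨0, fun f hf B _ => ?_⟩
      have : f = 0 := Subsingleton.elim _ _
      rw [this, hν.zero hB]; simp
    · refine ⟨M, fun f hf B hfB => ?_⟩
      have hB0 : 0 ≤ B := (abs_nonneg _).trans (hfB z)
      rw [mul_comm]
      exact ((hdom _ hA.one _ hM).smul hB hν hB0).abs_le hB hν hf.2 (by simpa using hfB)
  · intro H _ hH
    refine continuousOn_of_tight hν (hdom _ hA.one _ hM) ?_ hH
    intro V hV ε hε
    rw [hXv, pseudometricUniformity, iInf_union] at hV
    change V ∈ pseudometricUniformity P₀ ⊓ pseudometricUniformity P₁ at hV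
    rw [← hX₀, ← hX₁] at hV
    obtain ⟨V₀, hV₀, V₁, hV₁, rfl⟩ := mem_inf_iff.1 hV
    obtain ⟨d₀, hc₀, hs₀⟩ := hd₀ V₀ hV₀
    obtain ⟨d₁, hc₁, hs₁⟩ := hd₁ V₁ hV₁
    obtain ⟨F₀, hF₀⟩ := exists_tight hμ₀ hc₀.pseudo hc₀.small hε
    obtain ⟨F₁, hF₁⟩ := exists_tight hμ₁ hc₁.pseudo hc₁.small hε
    refine ⟨d₀, d₁, F₀, F₁, hc₀.pseudo, hc₁.pseudo,
      fun x y h0 h1 => ⟨hs₀ x y h0, hs₁ x y h1⟩, ?_, ?_⟩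
    · exact hdom _ (hA.sub hA.one (bump_mem F₀ hA fun a => hc₀.trunc_mem zero_le_one a)) _
        (hF₀.mono Set.inter_subset_left fun _ _ => rfl)
    · exact hdom _ (hA.sub hA.one (bump_mem F₁ hA fun a => (hc₁.trunc_mem zero_le_one a).symm)) _
        (hF₁.mono Set.inter_subset_right hμ₁₀)
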